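/- The 44-point origin-symmetric set on the unit sphere S^5 in E^6 obtained by normalizing (dividing by √6) all coordinate permutations and antipodes of the vectors (√6,0,0,0,0,0), (1,1,1,1,1,1), and (1,1,1,1,-1,-1) has covering radius arccos(2/3), which is strictly less than arccos(√(5/12)). -/

import Mathlib

open RealInnerProductSpace

/-- The caps of angular radius `r` centered at points of `A` cover the unit sphere. -/
def Covers {n : ℕ} (A : Set (EuclideanSpace ℝ (Fin n))) (r : ℝ) : Prop :=
  ∀ x ∈ Metric.sphere (0 : EuclideanSpace ℝ (Fin n)) 1, ∃ a ∈ A, Real.arccos ⟪x, a⟫ ≤ r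

/-- The covering radius of `A`. -/
noncomputable def covRadius {n : ℕ} (A : Set (EuclideanSpace ℝ (Fin n))) : ℝ :=
  sInf {r : ℝ | 0 < r ∧ Covers A r}

/-- The three generating vectors `(√6,0,0,0,0,0)`, `(1,1,1,1,1,1)`, `(1,1,1,1,-1,-1)`. -/
noncomputable def gen6 : Fin 3 → (Fin 6 → ℝ) :=
  ![fun i => if i = 0 then Real.sqrt 6 else 0, fun _ => 1, fun i => if i.val < 4 then 1 else -1]

/-- The 44-point configuration on `S⁵`: all coordinate permutations and antipodes of the
generating vectors, normalized by `√6`. -/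
noncomputable def A6 : Set (EuclideanSpace ℝ (Fin 6)) :=
  {x | ∃ k : Fin 3, ∃ σ : Equiv.Perm (Fin 6), ∃ ε : ℝ, (ε = 1 ∨ ε = -1) ∧
    ∀ i, x i = (Real.sqrt 6)⁻¹ * (ε * gen6 k (σ i))}

/-- Three-variable optimisation. -/
lemma core3 (s a b u : ℝ) (hs : s ^ 2 = 6) (hs1 : 2.449 < s) (hs2 : s < 2.45)
    (hu : 0 ≤ u) (ha : u / 2 ≤ a) (hb : u / 2 ≤ b) (ha1 : a < 1) (hb1 : b < 1)
    (h : a + b + u < s) : a ^ 2 + b ^ 2 + u ^ 2 < 9 / 4 := by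
  have hus : u < s / 2 := by linarith
  by_cases h1 : 2 / 3 * (s - 1) ≤ u
  · have e1 : 0 ≤ (a - u / 2) * (b - u / 2) := mul_nonneg (by linarith) (by linarith)
    have e2 : (a + b) * (a + b - u) ≤ (s - u) * (s - u - u) :=
      mul_le_mul (by linarith) (by linarith) (by linarith) (by linarith)
    have e3 : 0 ≤ (u - 2 / 3 * (s - 1)) * (s / 2 - u) := mul_nonneg (by linarith) (by linarith)
    have e4 : 0 < s / 2 - u := by linarith
    nlinarith
  · push Not at h1
    by_cases h2 : u < s - 2
    · nlinarith
    · push Not at h2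
      by_cases h3 : a + b < 1
      · nlinarith
      · push Not at h3
        have e1 : 0 ≤ (1 - a) * (1 - b) := mul_nonneg (by linarith) (by linarith)
        have e2 : (a + b - 1) * (a + b - 1) ≤ (s - u - 1) * (s - u - 1) :=
          mul_le_mul (by linarith) (by linarith) (by linarith) (by linarith)
        have e3 : 0 ≤ (2 / 3 * (s - 1) - u) * (u - (s - 2)) :=
          mul_nonneg (by linarith) (by linarith)
        have e4 : 0 ≤ (10 - 4 * s) * (u - (s - 2)) := mul_nonneg (by linarith) (by linarith)
        have e5 : a ^ 2 + b ^ 2 ≤ (s - u - 1) * (s - u - 1) + 1 := by linarith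
        have e6 : (s - u - 1) * (s - u - 1) + 1 + u ^ 2 < 9 / 4 := by
          ring_nf at e3 e4 ⊢
          linarith
        linarith

lemma core6 (s a b c d e f : ℝ) (hs : s ^ 2 = 6) (hs1 : 2.449 < s) (hs2 : s < 2.45)
    (hf : 0 ≤ f) (hef : f ≤ e) (hde : e ≤ d) (hcd : d ≤ c) (hbc : c ≤ b) (hab : b ≤ a)
    (ha : a < 1) (h : a + b + c + d + e - f < s) :
    a ^ 2 + b ^ 2 + c ^ 2 + d ^ 2 + e ^ 2 + f ^ 2 < 9 / 4 := by
  have e1 : 0 ≤ c * (e - f) := mul_nonneg (by linarith) (by linarith)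
  have e2 : 0 ≤ d * (c - f) := mul_nonneg (by linarith) (by linarith)
  have e3 : 0 ≤ e * (d - f) := mul_nonneg (by linarith) (by linarith)
  have hq : 0 ≤ c ^ 2 + d ^ 2 + e ^ 2 + f ^ 2 := by positivity
  have hv := Real.sq_sqrt hq
  have hv0 := Real.sqrt_nonneg (c ^ 2 + d ^ 2 + e ^ 2 + f ^ 2)
  have hv1 : √(c ^ 2 + d ^ 2 + e ^ 2 + f ^ 2) ≤ c + d + e - f := by
    apply Real.sqrt_le_iff.mpr
    constructor
    · linarith
    · nlinarith
  have hv2 : √(c ^ 2 + d ^ 2 + e ^ 2 + f ^ 2) ≤ 2 * c := by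
    apply Real.sqrt_le_iff.mpr
    constructor
    · linarith
    · have d1 : d ^ 2 ≤ c ^ 2 := pow_le_pow_left₀ (by linarith) (by linarith) 2
      have d2 : e ^ 2 ≤ c ^ 2 := pow_le_pow_left₀ (by linarith) (by linarith) 2
      have d3 : f ^ 2 ≤ c ^ 2 := pow_le_pow_left₀ (by linarith) (by linarith) 2
      linarith
  have := core3 s a b _ hs hs1 hs2 hv0 (by linarith) (by linarith) ha
    (by linarith) (by linarith)
  linarith

lemma sqrt6_sq : Real.sqrt 6 ^ 2 = 6 := Real.sq_sqrt (by norm_num)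
lemma sqrt6_lo : (2.449 : ℝ) < Real.sqrt 6 := Real.lt_sqrt_of_sq_lt (by norm_num)
lemma sqrt6_hi : Real.sqrt 6 < 2.45 := by
  rw [Real.sqrt_lt' (by norm_num)]; norm_num
lemma sqrt6_pos : 0 < Real.sqrt 6 := by linarith [sqrt6_lo]

/-- Norm bound without sorting assumption. -/
lemma core_unsorted (y : Fin 6 → ℝ) (hy : ∀ i, 0 ≤ y i) (h1 : ∀ i, y i < 2 / 3)
    (h : ∀ j, (∀ i, y j ≤ y i) → ∑ i, y i - 2 * y j < 2 / 3 * Real.sqrt 6) :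
    ∑ i, y i ^ 2 < 1 := by
  have hm := Tuple.monotone_sort y
  set σ := Tuple.sort y
  have hS : ∑ i, y i = ∑ i, y (σ i) := (Equiv.sum_comp σ y).symm
  have hQ : ∑ i, y i ^ 2 = ∑ i, y (σ i) ^ 2 := (Equiv.sum_comp σ (fun i => y i ^ 2)).symm
  have h0 := h (σ 0) (fun i => by
    have := hm (Fin.zero_le (σ.symm i))
    simpa using this)
  rw [hS] at h0
  rw [hQ]
  have m1 : y (σ 0) ≤ y (σ 1) := hm (by decide)
  have m2 : y (σ 1) ≤ y (σ 2) := hm (by decide)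
  have m3 : y (σ 2) ≤ y (σ 3) := hm (by decide)
  have m4 : y (σ 3) ≤ y (σ 4) := hm (by decide)
  have m5 : y (σ 4) ≤ y (σ 5) := hm (by decide)
  have p := hy (σ 0)
  have q := h1 (σ 5)
  rw [Fin.sum_univ_six] at h0 ⊢
  have := core6 (Real.sqrt 6) (3 / 2 * y (σ 5)) (3 / 2 * y (σ 4)) (3 / 2 * y (σ 3))
    (3 / 2 * y (σ 2)) (3 / 2 * y (σ 1)) (3 / 2 * y (σ 0)) sqrt6_sq sqrt6_lo sqrt6_hi
    (by linarith) (by linarith) (by linarith) (by linarith) (by linarith) (by linarith)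
    (by linarith) (by linarith)
  linarith

/-- Signed coordinate vectors. -/
noncomputable def fE (p : Fin 6 × ℤˣ) : EuclideanSpace ℝ (Fin 6) :=
  WithLp.toLp 2 (fun i => if i = p.1 then ((p.2 : ℤ) : ℝ) else 0)

/-- Normalised sign vectors. -/
noncomputable def fS (s : Fin 6 → ℤˣ) : EuclideanSpace ℝ (Fin 6) :=
  WithLp.toLp 2 (fun i => (Real.sqrt 6)⁻¹ * ((s i : ℤ) : ℝ))

lemma fE_inj : Function.Injective fE := by
  rintro ⟨i, a⟩ ⟨j, b⟩ h
  have h1 : fE (i, a) i = fE (j, b) i := by rw [h]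
  simp only [fE, if_true] at h1
  by_cases hij : i = j
  · subst hij
    rw [if_pos rfl] at h1
    have : a = b := Units.ext (by exact_mod_cast h1)
    rw [this]
  · simp [hij] at h1

lemma fS_inj : Function.Injective fS := by
  intro s t h
  funext i
  have h1 : fS s i = fS t i := by rw [h]
  simp only [fS] at h1
  have := mul_left_cancel₀ (inv_ne_zero sqrt6_pos.ne') h1
  exact Units.ext (by exact_mod_cast this)

lemma unit_cases (u : ℤˣ) : (((u : ℤ) : ℝ) = 1) ∨ (((u : ℤ) : ℝ) = -1) := by
  rcases Int.units_eq_one_or u with h | h <;> simp [h]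

/-- The permutation sending `p` to `4` and `q` to `5`. -/
def permPQ (p q : Fin 6) : Equiv.Perm (Fin 6) :=
  (Equiv.swap p 4).trans (Equiv.swap (Equiv.swap p 4 q) 5)

lemma even_cases : ∀ s : Fin 6 → ℤˣ, ∏ i, s i = 1 →
    (∃ b : ℤˣ, ∀ i, s i = b) ∨
    ∃ b : ℤˣ, ∃ p q : Fin 6, ∀ i, s i = b * (if (permPQ p q i).val < 4 then 1 else -1) := by
  decide +kernel

lemma even_le : ∀ s : Fin 6 → ℤˣ, ∏ i, s i = 1 →
    (s 0 : ℤ) + s 1 + s 2 + s 3 + s 4 - s 5 ≤ 4 := by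
  decide +kernel

lemma A6_eq : A6 = Set.range fE ∪ fS '' {s | ∏ i, s i = 1} := by
  have h6 := sqrt6_pos.ne'
  ext x
  constructor
  · rintro ⟨k, σ, ε, hε, hx⟩
    obtain ⟨u, hu⟩ : ∃ u : ℤˣ, ((u : ℤ) : ℝ) = ε := by
      rcases hε with h | h
      · exact ⟨1, by simp [h]⟩
      · exact ⟨-1, by simp [h]⟩
    fin_cases k
    · left
      refine ⟨(σ.symm 0, u), ?_⟩
      ext i
      rw [hx i]
      by_cases hi : i = σ.symm 0
      · simp [fE, gen6, hi, hu]; field_simp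
      · have : σ i ≠ 0 := fun h => hi (by simp [← h])
        simp [fE, gen6, hi, this]
    · right
      refine ⟨fun _ => u, ?_, ?_⟩
      · rcases Int.units_eq_one_or u with h | h <;> simp [h]
        decide
      · ext i
        rw [hx i]
        simp [fS, gen6, hu]
    · right
      refine ⟨fun i => u * (if (σ i).val < 4 then 1 else -1), ?_, ?_⟩
      · rw [Set.mem_setOf_eq,
          Equiv.prod_comp σ (fun i : Fin 6 => u * (if i.val < 4 then 1 else -1))]
        rcases Int.units_eq_one_or u with h | h <;> subst h <;> decide
      · ext i
        rw [hx i]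
        by_cases hi : (σ i).val < 4 <;> simp [fS, gen6, hu, hi]
  · rintro (⟨⟨j, u⟩, rfl⟩ | ⟨s, hs, rfl⟩)
    · refine ⟨0, Equiv.swap j 0, ((u : ℤ) : ℝ), unit_cases u, fun i => ?_⟩
      by_cases hi : i = j
      · subst hi
        simp [fE, gen6]; field_simp
      · have : Equiv.swap j 0 i ≠ 0 := fun h => hi (by
          have := congrArg (Equiv.swap j 0) h
          simpa using this)
        simp [fE, gen6, hi, this]
    · rcases even_cases s hs with ⟨b, hb⟩ | ⟨b, p, q, hb⟩
      · refine ⟨1, 1, ((b : ℤ) : ℝ), unit_cases b, fun i => ?_⟩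
        simp [fS, gen6, hb i]
      · refine ⟨2, permPQ p q, ((b : ℤ) : ℝ), unit_cases b, fun i => ?_⟩
        by_cases hi : (permPQ p q i).val < 4 <;> simp [fS, gen6, hb i, hi]

lemma fE_mem (p) : fE p ∈ A6 := by rw [A6_eq]; left; exact ⟨p, rfl⟩
lemma fS_mem (s) (hs : ∏ i, s i = 1) : fS s ∈ A6 := by rw [A6_eq]; right; exact ⟨s, hs, rfl⟩

lemma A6_ncard : A6.ncard = 44 := by
  rw [A6_eq, Set.ncard_union_eq ?_ (Set.toFinite _) (Set.toFinite _),
    Set.ncard_image_of_injective _ fS_inj, ← Set.image_univ,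
    Set.ncard_image_of_injective _ fE_inj, Set.ncard_univ]
  · have h1 : Nat.card (Fin 6 × ℤˣ) = 12 := by simp
    have h2 : {s : Fin 6 → ℤˣ | ∏ i, s i = 1}.ncard = 32 := by
      rw [Set.ncard_eq_toFinset_card']
      decide +kernel
    rw [h1, h2]
  · rw [Set.disjoint_left]
    rintro _ ⟨⟨j, u⟩, rfl⟩ ⟨s, -, h⟩
    have hz : ∃ i : Fin 6, i ≠ j := exists_ne j
    obtain ⟨i, hi⟩ := hz
    have h1 : fS s i = fE (j, u) i := by rw [h]
    simp [fS, fE, hi, sqrt6_pos.ne'] at h1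

lemma A6_neg_mem {x} (hx : x ∈ A6) : -x ∈ A6 := by
  obtain ⟨k, σ, ε, hε, h⟩ := hx
  refine ⟨k, σ, -ε, ?_, fun i => ?_⟩
  · rcases hε with h | h <;> simp [h]
  · simp [h i]

lemma A6_sphere : A6 ⊆ Metric.sphere (0 : EuclideanSpace ℝ (Fin 6)) 1 := by
  rw [A6_eq]
  rintro _ (⟨⟨j, u⟩, rfl⟩ | ⟨s, hs, rfl⟩)
  · have hu : ((u : ℤ) : ℝ) ^ 2 = 1 := by rcases unit_cases u with h | h <;> simp [h]
    simp [EuclideanSpace.norm_eq, fE, ite_pow, hu]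
  · have hu (i) : ((s i : ℤ) : ℝ) ^ 2 = 1 := by rcases unit_cases (s i) with h | h <;> simp [h]
    simp [EuclideanSpace.norm_eq, fS, mul_pow, hu]

lemma inner_fE (x : EuclideanSpace ℝ (Fin 6)) (j u) : ⟪x, fE (j, u)⟫ = ((u : ℤ) : ℝ) * x j := by
  simp [PiLp.inner_apply, fE]

lemma inner_fS (x : EuclideanSpace ℝ (Fin 6)) (s) :
    ⟪x, fS s⟫ = (Real.sqrt 6)⁻¹ * ∑ i, ((s i : ℤ) : ℝ) * x i := by
  simp [PiLp.inner_apply, fS, Finset.mul_sum, mul_assoc]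

lemma exists_inner (x : EuclideanSpace ℝ (Fin 6)) (hx : ‖x‖ = 1) :
    ∃ a ∈ A6, 2 / 3 ≤ ⟪x, a⟫ := by
  by_contra! hc
  have hn : ∑ i, |x i| ^ 2 = 1 := by
    have := EuclideanSpace.norm_sq_eq x
    rw [hx] at this
    simpa using this.symm
  have hlt : ∑ i, |x i| ^ 2 < 1 := by
    apply core_unsorted _ (fun i => abs_nonneg _)
    · intro i
      have a := hc _ (fE_mem (i, 1))
      have b := hc _ (fE_mem (i, -1))
      rw [inner_fE] at a b
      simp at a b
      rw [abs_lt]; constructor <;> linarith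
    · intro j hj
      let s : Fin 6 → ℤˣ := fun i => if x i < 0 then -1 else 1
      have hs : ∀ i, ((s i : ℤ) : ℝ) * x i = |x i| := by
        intro i
        by_cases h : x i < 0
        · simp [s, h, abs_of_neg h]
        · simp [s, h, abs_of_nonneg (not_lt.mp h)]
      have key : ∀ t : Fin 6 → ℤˣ, ∏ i, t i = 1 →
          ∑ i, ((t i : ℤ) : ℝ) * x i < 2 / 3 * Real.sqrt 6 := by
        intro t ht
        have := hc _ (fS_mem t ht)
        rw [inner_fS, inv_mul_lt_iff₀ sqrt6_pos] at this
        linarith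
      rcases Int.units_eq_one_or (∏ i, s i) with h | h
      · have := key s h
        simp only [hs] at this
        linarith [abs_nonneg (x j)]
      · have := key (fun i => (if i = j then -1 else 1) * s i) (by
          rw [Finset.prod_mul_distrib, h]; simp)
        have e : ∀ i, ((((if i = j then -1 else 1) * s i : ℤˣ) : ℤ) : ℝ) * x i
            = |x i| - (if i = j then 2 * |x j| else 0) := by
          intro i
          by_cases hi : i = j
          · subst hi
            have := hs i
            simp; linarith
          · simp [hi, hs i]
        simp only [e, Finset.sum_sub_distrib] at this
        simpa using this
  linarith

lemma arccos_le_of_covers (r : ℝ) (h : Covers A6 r) : Real.arccos (2 / 3) ≤ r := by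
  let t : Fin 6 → ℤˣ := ![1, 1, 1, 1, 1, -1]
  have hx : fS t ∈ Metric.sphere (0 : EuclideanSpace ℝ (Fin 6)) 1 := by
    have hu (i) : ((t i : ℤ) : ℝ) ^ 2 = 1 := by rcases unit_cases (t i) with h | h <;> simp [h]
    simp [EuclideanSpace.norm_eq, fS, mul_pow, hu]
  obtain ⟨a, ha, har⟩ := h _ hx
  refine le_trans (Real.arccos_le_arccos ?_) har
  have hi : (Real.sqrt 6)⁻¹ ≤ 2 / 3 := by
    rw [inv_le_comm₀ sqrt6_pos (by norm_num)]
    linarith [sqrt6_lo]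
  have hp := inv_pos.mpr sqrt6_pos
  rw [A6_eq] at ha
  rcases ha with ⟨⟨j, u⟩, rfl⟩ | ⟨s, hs, rfl⟩
  · rw [inner_fE]
    simp only [fS]
    rcases unit_cases u with h | h <;> rcases unit_cases (t j) with h' | h' <;>
      rw [h, h'] <;> linarith
  · rw [inner_fS]
    have h4 : ((s 0 : ℤ) : ℝ) + (s 1 : ℤ) + (s 2 : ℤ) + (s 3 : ℤ) + (s 4 : ℤ) - (s 5 : ℤ) ≤ 4 := by
      exact_mod_cast even_le s hs
    have e : ∑ i, ((s i : ℤ) : ℝ) * fS t i = (Real.sqrt 6)⁻¹ *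
        (((s 0 : ℤ) : ℝ) + (s 1 : ℤ) + (s 2 : ℤ) + (s 3 : ℤ) + (s 4 : ℤ) - (s 5 : ℤ)) := by
      rw [Fin.sum_univ_six]
      simp [fS, t]
      ring
    rw [e, ← mul_assoc, ← mul_inv, ← sq, sqrt6_sq]
    linarith

theorem dim6_covering : A6.ncard = 44 ∧
    -A6 = A6 ∧
    A6 ⊆ Metric.sphere (0 : EuclideanSpace ℝ (Fin 6)) 1 ∧
    covRadius A6 = Real.arccos (2 / 3) ∧
    Real.arccos (2 / 3) < Real.arccos (Real.sqrt (5 / 12)) := by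
  refine ⟨A6_ncard, ?_, A6_sphere, ?_, ?_⟩
  · ext x
    constructor
    · intro h
      have := A6_neg_mem (Set.mem_neg.mp h)
      simpa using this
    · intro h
      exact Set.mem_neg.mpr (A6_neg_mem h)
  · have hl : IsLeast {r : ℝ | 0 < r ∧ Covers A6 r} (Real.arccos (2 / 3)) := by
      refine ⟨⟨Real.arccos_pos.mpr (by norm_num), ?_⟩, fun r hr => arccos_le_of_covers r hr.2⟩
      intro x hx
      obtain ⟨a, ha, h⟩ := exists_inner x (by simpa using hx)
      exact ⟨a, ha, Real.arccos_le_arccos h⟩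
    exact hl.csInf_eq
  · have h : Real.sqrt (5 / 12) < 2 / 3 := by
      rw [Real.sqrt_lt' (by norm_num)]; norm_num
    exact Real.arccos_lt_arccos (by linarith [Real.sqrt_nonneg (5 / 12 : ℝ)]) h (by norm_num)
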